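/- Let N₁ : ℝ → ℝ satisfy N₁(G) ≥ 2 for all large G and ∫₂^{N₁(G)} (−P(t)) dt = a·G + O(1) as G → ∞. Let g : ℝ → ℝ satisfy (i) g(T) − T ∼ (1−c)·T/ln T as T → ∞, and (ii) for every fixed l > 0, ∫_{g(T)}^{g(T+2l)} |ζ(1/2+it)|² dt = (1+o(1))·2l·ln T as T → ∞. Then for every fixed l > 0, the product [∫_{N₁(T)}^{N₁(g(T))} (−P(t)) dt] · [∫_{g(T)}^{g(T+2l)} |ζ(1/2+it)|² dt] = (1+o(1))·2l·a·(1−c)·T as T → ∞. -/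

import Mathlib

/-!
Write `I G = ∫_2^{N₁ G} (-P) = a G + O(1)`. As `c < 1`, hypothesis (i) makes `g T - T`, hence `g T`,
tend to infinity, so the law for `I` applies at `g T` as well as at `T`. Subtracting,
`I (g T) - I T = a (g T - T) + O(1) ∼ a (1 - c) T / log T`, the bounded error being negligible
because `T / log T → ∞`. The logarithm cancels against the factor `2 l log T` of (ii).
-/

open Filter Real Asymptotics MeasureTheory

noncomputable def pichar (t : ℝ) : ℝ := (Nat.primeCounting ⌊t⌋₊ : ℝ)

noncomputable def P (t : ℝ) : ℝ := pichar t - ∫ u in (2:ℝ)..t, 1 / Real.log u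

noncomputable def a : ℝ := Real.exp 4.5

noncomputable def c : ℝ := Real.eulerMascheroniConstant

noncomputable def Z (t : ℝ) : ℝ := ‖riemannZeta (1/2 + (t : ℂ) * Complex.I)‖ ^ 2

open scoped Topology

lemma tendsto_div_log_atTop : Tendsto (fun x : ℝ => x / log x) atTop atTop := by
  have hquot : Tendsto (fun x : ℝ => log x / x) atTop (𝓝[>] 0) := by
    refine tendsto_nhdsWithin_iff.2 ⟨isLittleO_log_id_atTop.tendsto_div_nhds_zero, ?_⟩
    filter_upwards [eventually_gt_atTop 1] with x hx
    exact div_pos (log_pos hx) (zero_lt_one.trans hx)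
  exact hquot.inv_tendsto_nhdsGT_zero.congr fun x => inv_div _ _

section Asymptotics

variable {ι : Type*} {L : Filter ι}

lemma tendsto_atTop_of_sub_isEquivalent {𝕜 : Type*} [NormedField 𝕜] [LinearOrder 𝕜]
    [IsStrictOrderedRing 𝕜] [OrderTopology 𝕜] {x y h : ι → 𝕜} (hy : Tendsto y L atTop)
    (hxy : (fun i => x i - y i) ~[L] h) (hh : Tendsto h L atTop) : Tendsto x L atTop := by
  simpa only [sub_add_cancel] using (hxy.symm.tendsto_atTop hh).atTop_add_atTop hy

variable {𝕜 E : Type*} [NormedField 𝕜] [NormedAddCommGroup E] {M : Filter 𝕜} {x y h : ι → 𝕜} {v : E}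

lemma isEquivalent_comp_sub_comp_of_sub_smul_isBigO_one [NormedSpace 𝕜 E] {F : 𝕜 → E} (hv : v ≠ 0)
    (hF : (fun z => F z - z • v) =O[M] (fun _ => (1 : ℝ))) (hx : Tendsto x L M)
    (hy : Tendsto y L M) (hxy : (fun i => x i - y i) ~[L] h)
    (hh : Tendsto h L (Bornology.cobounded 𝕜)) :
    (fun i => F (x i) - F (y i)) ~[L] (fun i => h i • v) := by
  have hmain : (fun i => (x i - y i) • v) ~[L] (fun i => h i • v) :=
    hxy.smul (IsEquivalent.refl (u := fun _ => v))
  have herr : (fun i => (F (x i) - x i • v) - (F (y i) - y i • v)) =O[L] (fun _ => (1 : ℝ)) :=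
    (hF.comp_tendsto hx).sub (hF.comp_tendsto hy)
  have hsmall : (fun _ => (1 : ℝ)) =o[L] (fun i => h i • v) := by
    refine isLittleO_const_left.2 (Or.inr ?_)
    simpa only [Function.comp_def, norm_smul] using
      (tendsto_norm_cobounded_atTop.comp hh).atTop_mul_const (norm_pos_iff.2 hv)
  refine (hmain.add_isLittleO (herr.trans_isLittleO hsmall)).congr_left (.of_forall fun i => ?_)
  simp only [Pi.add_apply, sub_smul]
  abel

lemma isEquivalent_integral_of_primitive_sub_smul_isBigO_one [NormedSpace 𝕜 E] [NormedSpace ℝ E]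
    {μ : Measure ℝ} {f : ℝ → E} {b : ℝ} {N : 𝕜 → ℝ} (hv : v ≠ 0)
    (hf : ∀ᶠ z in M, IntervalIntegrable f μ b (N z))
    (hN : (fun z => (∫ t in b..N z, f t ∂μ) - z • v) =O[M] (fun _ => (1 : ℝ)))
    (hx : Tendsto x L M) (hy : Tendsto y L M) (hxy : (fun i => x i - y i) ~[L] h)
    (hh : Tendsto h L (Bornology.cobounded 𝕜)) :
    (fun i => ∫ t in N (y i)..N (x i), f t ∂μ) ~[L] (fun i => h i • v) := by
  refine (isEquivalent_comp_sub_comp_of_sub_smul_isBigO_one hv hN hx hy hxy hh).congr_left ?_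
  filter_upwards [hx.eventually hf, hy.eventually hf] with i hxi hyi
  exact intervalIntegral.integral_interval_sub_left hxi hyi

end Asymptotics

lemma differentiableOn_primitive_of_isOpen {E : Type*} [NormedAddCommGroup E] [NormedSpace ℝ E]
    [CompleteSpace E] {s : Set ℝ} (hs : IsOpen s) (hs' : s.OrdConnected) {f : ℝ → E}
    (hf : ContinuousOn f s) {x : ℝ} (hx : x ∈ s) :
    DifferentiableOn ℝ (fun t => ∫ u in x..t, f u) s := fun t ht =>
  (intervalIntegral.integral_hasDerivAt_right
    (hf.mono (hs'.uIcc_subset hx ht)).intervalIntegrable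
    (hf.stronglyMeasurableAtFilter hs t ht)
    (hf.continuousAt (hs.mem_nhds ht))).differentiableAt.differentiableWithinAt

lemma monotone_pichar : Monotone pichar := fun _ _ h =>
  Nat.cast_le.2 (Nat.monotone_primeCounting (Nat.floor_mono h))

lemma continuousOn_one_div_log : ContinuousOn (fun u : ℝ => 1 / log u) (Set.Ioi 1) := by
  simpa only [one_div] using differentiableOn_inv_log.continuousOn

lemma intervalIntegrable_P {x y : ℝ} (hx : 1 < x) (hy : 1 < y) :
    IntervalIntegrable P volume x y := by
  have hli : ContinuousOn (fun t => ∫ u in (2 : ℝ)..t, 1 / log u) (Set.Ioi 1) :=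
    (differentiableOn_primitive_of_isOpen isOpen_Ioi Set.ordConnected_Ioi continuousOn_one_div_log
      (Set.mem_Ioi.2 one_lt_two)).continuousOn
  exact monotone_pichar.intervalIntegrable.sub
    (hli.mono (Set.ordConnected_Ioi.uIcc_subset hx hy)).intervalIntegrable

lemma c_lt_one : c < 1 :=
  eulerMascheroniConstant_lt_two_thirds.trans (by norm_num)

/-- The basic product formula (3.13): for every fixed `l > 0`,
`[∫_{N₁ T}^{N₁(g T)} (-P)] · [∫_{g T}^{g(T+2l)} |ζ(1/2+it)|²] = (1+o(1))·2l·a·(1-c)·T`. -/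
theorem stmt_6 (N₁ : ℝ → ℝ)
    (hN2 : ∀ᶠ G in atTop, 2 ≤ N₁ G)
    (hN : (fun G => (∫ t in (2:ℝ)..N₁ G, -P t) - a * G) =O[atTop] (fun _ => (1:ℝ)))
    (g : ℝ → ℝ)
    (hg1 : (fun T => g T - T) ~[atTop] (fun T => (1 - c) * T / Real.log T))
    (hg2 : ∀ l : ℝ, 0 < l →
      (fun T => ∫ t in g T..g (T + 2 * l), Z t) ~[atTop] (fun T => 2 * l * Real.log T))
    (l : ℝ) (hl : 0 < l) :
    (fun T => (∫ t in N₁ T..N₁ (g T), -P t) * ∫ t in g T..g (T + 2 * l), Z t)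
      ~[atTop] (fun T => 2 * l * a * (1 - c) * T) := by
  have hgap : Tendsto (fun T : ℝ => (1 - c) * T / log T) atTop atTop := by
    simpa only [mul_div_assoc] using tendsto_div_log_atTop.const_mul_atTop (sub_pos.2 c_lt_one)
  have hg : Tendsto g atTop atTop := tendsto_atTop_of_sub_isEquivalent tendsto_id hg1 hgap
  have hP : ∀ᶠ G in atTop, IntervalIntegrable (fun t => -P t) volume 2 (N₁ G) :=
    hN2.mono fun G hG => (intervalIntegrable_P one_lt_two (one_lt_two.trans_le hG)).neg
  have hint : (fun T => ∫ t in N₁ T..N₁ (g T), -P t) ~[atTop]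
      (fun T => (1 - c) * T / log T * a) :=
    isEquivalent_integral_of_primitive_sub_smul_isBigO_one (exp_ne_zero _) hP
      (by simpa only [smul_eq_mul, mul_comm a] using hN) hg tendsto_id hg1
      (hgap.mono_right IsOrderBornology.atTop_le_cobounded)
  refine (hint.mul (hg2 l hl)).congr_right ?_
  filter_upwards [eventually_gt_atTop 1] with T hT
  have hlog : log T ≠ 0 := (log_pos hT).ne'
  simp only [Pi.mul_apply]
  field_simp
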